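/- Suppose f satisfies Assumptions 1 (each f_i is L-smooth), 2 (component gradient variance with constants A,B ≥ 0), 3 (primal function well-defined), and 4 (y-side μ₂-PL); let κ₂ := L/μ₂, λ > 0, and let the step sizes satisfy α ≤ λ/(((λ+1)(κ₂+1)+1)qL), β ≤ 1/(qL), α² + β² ≤ 1/(3q(q−1)L²), and C₀ := qβ − 2L²q(q² + (q(q−1)/(n−1))A)((2λ+1)α + β)β² ≥ 0. Then for each epoch k of mini-batch simSGDA-RR with uniformly random permutation: E_k[V_λ(z₀^{k+1})] − V_λ(z₀^k) ≤ −C₁‖∇Φ(x₀^k)‖² − C₂(Φ(x₀^k) − f(z₀^k)) + C₃, where C₁ = ((λ−1)/2)qα − 2L²q(q² + (q(q−1)/(n−1))A)((2λ+1)α + β)α², C₂ = μ₂qβ − 2(λ+2)Lκ₂qα − 2L²μ₂q(q² + (q(q−1)/(n−1))A)((2λ+1)α + β)(2κ₂²α² + β²), and C₃ = (L²q²(q−1)/(n−1))((2λ+1)α + β)(α² + β²)B. -/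

import Mathlib

/-- Mini-batch average of (partial) gradients over the `t`-th batch (0-indexed) induced by a
permutation `σ` with batch size `b`. -/
noncomputable def batchAvg {n : ℕ} {E F V : Type*} [AddCommGroup V] [Module ℝ V] (b : ℕ)
    (g : Fin n → E → F → V) (σ : Equiv.Perm (Fin n)) (t : ℕ) (x : E) (y : F) : V :=
  (b : ℝ)⁻¹ •
    ∑ j ∈ Finset.univ.filter (fun j : Fin n => b * t ≤ (j : ℕ) ∧ (j : ℕ) < b * (t + 1)),
      g (σ j) x y

/-- `t` steps of one epoch of mini-batch simultaneous SGDA with permutation `σ`. -/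
noncomputable def simEpoch {n : ℕ} {E F : Type*} [AddCommGroup E] [Module ℝ E]
    [AddCommGroup F] [Module ℝ F] (α β : ℝ) (b : ℕ)
    (g1 : Fin n → E → F → E) (g2 : Fin n → E → F → F)
    (σ : Equiv.Perm (Fin n)) : ℕ → E × F → E × F
  | 0, z => z
  | t + 1, z =>
    let w := simEpoch α β b g1 g2 σ t z
    (w.1 - α • batchAvg b g1 σ t w.1 w.2, w.2 + β • batchAvg b g2 σ t w.1 w.2)

/-! One epoch is a single large simultaneous descent–ascent step of lengths `q α`, `q β` along the
average of the mini-batch gradients seen on the way. The Polyak–Łojasiewicz inequality makes `Φ`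
smooth, with gradient `∇₁ f` at any maximizer, and bounds `‖∇Φ - ∇₁ f‖²` by the gap `Φ - f`
through quadratic growth; so the descent lemma controls the large step up to the error of the
averaged gradient. By smoothness that error is at most the squared drift of the iterates from the
start of the epoch, which the step-size bound keeps comparable to the drift of gradient steps
frozen at the starting point, and the expectation of the latter is the variance of sampling
without replacement. -/

section

open scoped NNReal RealInnerProductSpace BigOperators

open Filter Topology WithLp

section Smooth

variable {H : Type*} [NormedAddCommGroup H] [InnerProductSpace ℝ H] [CompleteSpace H]

lemma abs_sub_sub_inner_le_of_lipschitzWith_gradient {f : H → ℝ} {G : H → H} {L : ℝ≥0}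
    (hf : ∀ z, HasGradientAt f (G z) z) (hG : LipschitzWith L G) (z w : H) :
    |f w - f z - ⟪G z, w - z⟫| ≤ L / 2 * ‖w - z‖ ^ 2 := by
  set d := w - z with hd
  have hline (t : ℝ) : HasDerivAt (fun s : ℝ => z + s • d) d t := by
    simpa using ((hasDerivAt_id t).smul_const d).const_add z
  have hremainder (t : ℝ) : HasDerivAt (fun s : ℝ => f (z + s • d) - f z - s * ⟪G z, d⟫)
      ⟪G (z + t • d) - G z, d⟫ t := by
    have h := ((hf (z + t • d)).hasFDerivAt.comp_hasDerivAt t (hline t)).sub_const (f z)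
    exact (h.sub ((hasDerivAt_id t).mul_const ⟪G z, d⟫)).congr_deriv (by simp [inner_sub_left])
  have hparabola (t : ℝ) : HasDerivAt (fun s : ℝ => L * ‖d‖ ^ 2 / 2 * s ^ 2) (L * ‖d‖ ^ 2 * t) t :=
    (((hasDerivAt_id t).pow 2).const_mul (L * ‖d‖ ^ 2 / 2)).congr_deriv (by simp; ring)
  have hslope (t : ℝ) (ht : t ∈ Set.Ico (0 : ℝ) 1) :
      ‖⟪G (z + t • d) - G z, d⟫‖ ≤ L * ‖d‖ ^ 2 * t :=
    calc ‖⟪G (z + t • d) - G z, d⟫‖ ≤ ‖G (z + t • d) - G z‖ * ‖d‖ := norm_inner_le_norm _ _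
      _ ≤ L * ‖z + t • d - z‖ * ‖d‖ := by gcongr; exact hG.norm_sub_le _ _
      _ = L * ‖d‖ ^ 2 * t := by
        rw [add_sub_cancel_left, norm_smul, Real.norm_of_nonneg ht.1]; ring
  have h := image_norm_le_of_norm_deriv_right_le_deriv_boundary
    (fun t _ => (hremainder t).continuousAt.continuousWithinAt)
    (fun t _ => (hremainder t).hasDerivWithinAt) (by simp) hparabola hslope
    (Set.right_mem_Icc.2 zero_le_one)
  simpa [hd, div_mul_eq_mul_div] using h

lemma mul_norm_sq_le_sub_gradient_step {f : H → ℝ} {G : H → H} {L : ℝ≥0} {η : ℝ}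
    (hf : ∀ z, HasGradientAt f (G z) z) (hG : LipschitzWith L G) (hη : 0 ≤ η) (z : H) :
    η * (1 - L * η / 2) * ‖G z‖ ^ 2 ≤ f z - f (z - η • G z) := by
  have h := (abs_le.1 (abs_sub_sub_inner_le_of_lipschitzWith_gradient hf hG z (z - η • G z))).2
  rw [sub_sub_cancel_left, inner_neg_right, real_inner_smul_right, real_inner_self_eq_norm_sq,
    norm_neg, norm_smul, Real.norm_of_nonneg hη] at h
  linarith

lemma hasGradientAt_sum_div {ι : Type*} {s : Finset ι} {f : ι → H → ℝ} {g : ι → H} {z : H} (c : ℝ)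
    (h : ∀ i ∈ s, HasGradientAt (f i) (g i) z) :
    HasGradientAt (fun w => (∑ i ∈ s, f i w) / c) (c⁻¹ • ∑ i ∈ s, g i) z := by
  rw [hasGradientAt_iff_hasFDerivAt]
  simpa [div_eq_inv_mul] using
    (HasFDerivAt.fun_sum fun i hi => (h i hi).hasFDerivAt).const_mul c⁻¹

end Smooth

section PartialGradients

variable {E F : Type*} [NormedAddCommGroup E] [InnerProductSpace ℝ E] [CompleteSpace E]
  [NormedAddCommGroup F] [InnerProductSpace ℝ F] [CompleteSpace F]

lemma hasGradientAt_toLp_of_partial {f : E → F → ℝ} {g₁ : E → F → E} {g₂ : E → F → F}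
    (h₁ : ∀ x y, HasGradientAt (fun x' => f x' y) (g₁ x y) x)
    (h₂ : ∀ x y, HasGradientAt (fun y' => f x y') (g₂ x y) y)
    (hg : Continuous fun z : WithLp 2 (E × F) => toLp 2 (g₁ z.fst z.snd, g₂ z.fst z.snd))
    (z : WithLp 2 (E × F)) :
    HasGradientAt (fun w : WithLp 2 (E × F) => f w.fst w.snd)
      (toLp 2 (g₁ z.fst z.snd, g₂ z.fst z.snd)) z := by
  have hcont : Continuous fun u : E × F => (g₁ u.1 u.2, g₂ u.1 u.2) :=
    (prod_continuous_ofLp 2 E F).comp (hg.comp (prod_continuous_toLp 2 E F))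
  have hjoint := (hasStrictFDerivAt_uncurry_coprod (u := ofLp z) (f := f)
    (f₁ := fun x y => InnerProductSpace.toDual ℝ E (g₁ x y))
    (f₂ := fun x y => InnerProductSpace.toDual ℝ F (g₂ x y))
    (.of_forall fun v => (h₁ v.1 v.2).hasFDerivAt) (.of_forall fun v => (h₂ v.1 v.2).hasFDerivAt)
    ((InnerProductSpace.toDual ℝ E).continuous.comp hcont.fst).continuousAt
    ((InnerProductSpace.toDual ℝ F).continuous.comp hcont.snd).continuousAt).hasFDerivAt
  rw [hasGradientAt_iff_hasFDerivAt]
  refine (hjoint.comp z (prodContinuousLinearEquiv 2 ℝ E F).hasFDerivAt).congr_fderiv ?_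
  ext w
  simp [Function.HasUncurry.uncurry]

lemma hasGradientAt_snd_of_toLp {f : WithLp 2 (E × F) → ℝ} {x : E} {y : F} {g : WithLp 2 (E × F)}
    (h : HasGradientAt f g (toLp 2 (x, y))) :
    HasGradientAt (fun y' => f (toLp 2 (x, y'))) g.snd y := by
  rw [hasGradientAt_iff_hasFDerivAt] at h ⊢
  have hslice : HasFDerivAt (fun y' : F => toLp 2 (x, y'))
      ((prodContinuousLinearEquiv 2 ℝ E F).symm ∘L ContinuousLinearMap.inr ℝ E F) y :=
    (prodContinuousLinearEquiv 2 ℝ E F).symm.hasFDerivAt.comp y (hasFDerivAt_prodMk_right x y)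
  refine (h.comp y hslice).congr_fderiv ?_
  ext w
  simp

end PartialGradients

section PolyakLojasiewicz

lemma exists_tendsto_of_dist_le_sub {X : Type*} [PseudoMetricSpace X] [CompleteSpace X] {u : ℕ → X}
    {r : ℕ → ℝ} (hr : ∀ k, 0 ≤ r k) (hu : ∀ k, dist (u k) (u (k + 1)) ≤ r k - r (k + 1)) :
    ∃ a, Tendsto u atTop (𝓝 a) ∧ dist (u 0) a ≤ r 0 := by
  have hpartial (N : ℕ) : ∑ k ∈ Finset.range N, dist (u k) (u (k + 1)) ≤ r 0 :=
    calc ∑ k ∈ Finset.range N, dist (u k) (u (k + 1))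
        ≤ ∑ k ∈ Finset.range N, (r k - r (k + 1)) := Finset.sum_le_sum fun k _ => hu k
      _ ≤ r 0 := by rw [Finset.sum_range_sub']; linarith [hr N]
  have hsummable : Summable fun k => dist (u k) (u (k + 1)) :=
    summable_of_sum_range_le (fun _ => dist_nonneg) hpartial
  obtain ⟨a, ha⟩ := cauchySeq_tendsto_of_complete
    (cauchySeq_of_dist_le_of_summable _ (fun _ => le_rfl) hsummable)
  exact ⟨a, ha, (dist_le_tsum_of_dist_le_of_tendsto₀ _ (fun _ => le_rfl) hsummable ha).trans
    (Real.tsum_le_of_sum_range_le (fun _ => dist_nonneg) hpartial)⟩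

variable {F : Type*} [NormedAddCommGroup F] [InnerProductSpace ℝ F] [CompleteSpace F]
  {h : F → ℝ} {g : F → F} {L : ℝ≥0} {μ : ℝ}

/- Dividing the decrease of `h` by `√(h y) + √(h (y - η • g y)) ≤ 2 √(h y) ≤ 2 ‖g y‖ / √(2 μ)` turns
the quadratic decrease in `‖g y‖` into a linear one, which can be summed along the iteration. -/
lemma mul_norm_le_sqrt_sub_sqrt_of_PL {η c : ℝ} (hh : ∀ y, HasGradientAt h (g y) y)
    (hg : LipschitzWith L g) (h0 : ∀ y, 0 ≤ h y) (hPL : ∀ y, 2 * μ * h y ≤ ‖g y‖ ^ 2)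
    (hη : 0 < η) (hc : 0 < c) (hcη : 2 * c ≤ (1 - L * η / 2) * √(2 * μ)) (y : F) :
    c * (η * ‖g y‖) ≤ √(h y) - √(h (y - η • g y)) := by
  set θ := 1 - L * η / 2
  have hθpos : 0 < θ := by
    by_contra! hθ'
    linarith [mul_nonpos_of_nonpos_of_nonneg hθ' (Real.sqrt_nonneg (2 * μ))]
  have hdescent : η * θ * ‖g y‖ ^ 2 ≤ h y - h (y - η • g y) :=
    mul_norm_sq_le_sub_gradient_step hh hg hη.le y
  have hle : √(h (y - η • g y)) ≤ √(h y) :=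
    Real.sqrt_le_sqrt (by linarith [(by positivity : 0 ≤ η * θ * ‖g y‖ ^ 2)])
  have hsqrt : √(2 * μ) * √(h y) ≤ ‖g y‖ := by
    rw [← Real.sqrt_mul' _ (h0 y)]
    exact Real.sqrt_le_iff.2 ⟨norm_nonneg _, hPL y⟩
  rw [← Real.sq_sqrt (h0 y), ← Real.sq_sqrt (h0 (y - η • g y)), sq_sub_sq] at hdescent
  have hlinear : c * (η * ‖g y‖) * (2 * √(h y)) ≤ (√(h y) - √(h (y - η • g y))) * (2 * √(h y)) :=
    calc c * (η * ‖g y‖) * (2 * √(h y)) = 2 * c * √(h y) * (η * ‖g y‖) := by ring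
      _ ≤ θ * √(2 * μ) * √(h y) * (η * ‖g y‖) := by gcongr
      _ = θ * (√(2 * μ) * √(h y)) * (η * ‖g y‖) := by ring
      _ ≤ θ * ‖g y‖ * (η * ‖g y‖) := by gcongr
      _ = η * θ * ‖g y‖ ^ 2 := by ring
      _ ≤ (√(h y) + √(h (y - η • g y))) * (√(h y) - √(h (y - η • g y))) := hdescent
      _ ≤ 2 * √(h y) * (√(h y) - √(h (y - η • g y))) := by gcongr; linarith
      _ = (√(h y) - √(h (y - η • g y))) * (2 * √(h y)) := mul_comm _ _
  rcases (Real.sqrt_nonneg (h y)).eq_or_lt with hzero | hpos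
  · have hstationary : ‖g y‖ = 0 := by
      rw [← hzero, zero_add, zero_sub] at hdescent
      have : η * θ * ‖g y‖ ^ 2 ≤ 0 := by nlinarith [Real.sqrt_nonneg (h (y - η • g y))]
      simpa using nonpos_of_mul_nonpos_right this (by positivity)
    rw [hstationary]
    linarith
  · exact le_of_mul_le_mul_right hlinear (by positivity)

lemma exists_eq_zero_norm_sub_sq_le_of_PL {m : ℝ} (hh : ∀ y, HasGradientAt h (g y) y)
    (hg : LipschitzWith L g) (h0 : ∀ y, 0 ≤ h y) (hPL : ∀ y, 2 * μ * h y ≤ ‖g y‖ ^ 2)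
    (hm : 0 < m) (hmμ : m < μ) (y₀ : F) : ∃ y, h y = 0 ∧ m / 2 * ‖y₀ - y‖ ^ 2 ≤ h y₀ := by
  set c := √(m / 2) with hc
  have hcpos : 0 < c := Real.sqrt_pos.2 (by positivity)
  have hcμ : 2 * c < √(2 * μ) := Real.lt_sqrt_of_sq_lt (by
    rw [mul_pow, hc, Real.sq_sqrt (by positivity)]; linarith)
  obtain ⟨η, hηpos, hη⟩ : ∃ η : ℝ, 0 < η ∧ 2 * c ≤ (1 - L * η / 2) * √(2 * μ) := by
    have hlim : Tendsto (fun η : ℝ => (1 - L * η / 2) * √(2 * μ)) (𝓝[>] 0) (𝓝 (√(2 * μ))) :=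
      (Continuous.tendsto' (by fun_prop) 0 _ (by simp)).mono_left nhdsWithin_le_nhds
    exact (eventually_mem_nhdsWithin.and (hlim.eventually_const_le hcμ)).exists
  set u : ℕ → F := fun k => (fun y => y - η • g y)^[k] y₀
  have hsucc (k : ℕ) : u (k + 1) = u k - η • g (u k) := Function.iterate_succ_apply' _ _ _
  have hdist (k : ℕ) : dist (u k) (u (k + 1)) = η * ‖g (u k)‖ := by
    rw [hsucc, dist_eq_norm, sub_sub_cancel, norm_smul, Real.norm_of_nonneg hηpos.le]
  obtain ⟨y, huy, hy⟩ := exists_tendsto_of_dist_le_sub (u := u) (r := fun k => √(h (u k)) / c)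
    (fun k => by positivity) fun k => by
      rw [hdist, ← sub_div, le_div_iff₀' hcpos, hsucc]
      exact mul_norm_le_sqrt_sub_sqrt_of_PL hh hg h0 hPL hηpos hcpos hη (u k)
  have hstationary : g y = 0 := by
    have hiter : Tendsto (fun k => u k - η • g (u k)) atTop (𝓝 (y - η • g y)) :=
      huy.sub (((hg.continuous.tendsto y).comp huy).const_smul η)
    have hfix := tendsto_nhds_unique ((tendsto_add_atTop_iff_nat 1).2 huy)
      (hiter.congr fun k => (hsucc k).symm)
    exact (smul_eq_zero.1 (sub_eq_self.1 hfix.symm)).resolve_left hηpos.ne'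
  refine ⟨y, le_antisymm ?_ (h0 y), ?_⟩
  · have := hPL y
    rw [hstationary, norm_zero, zero_pow two_ne_zero] at this
    exact nonpos_of_mul_nonpos_right this (by linarith)
  · rw [dist_eq_norm, le_div_iff₀' hcpos, Real.le_sqrt (by positivity) (h0 _), mul_pow, hc,
      Real.sq_sqrt (by positivity)] at hy
    exact hy

end PolyakLojasiewicz

section PrimalFunction

variable {E F : Type*} [NormedAddCommGroup E] [InnerProductSpace ℝ E] [CompleteSpace E]
  [NormedAddCommGroup F] [InnerProductSpace ℝ F] [CompleteSpace F]

/-- `f` is `L`-smooth with gradient field `G`, its maximum over the second variable is attained with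
value `Φ`, and `f` is `μ`-Polyak–Łojasiewicz in the second variable. The arguments of `f` are paired
in the `L²` product, so that smoothness refers to the Euclidean norm of the pair. -/
structure IsSmoothPLMax (f : WithLp 2 (E × F) → ℝ) (G : WithLp 2 (E × F) → WithLp 2 (E × F))
    (Φ : E → ℝ) (L : ℝ≥0) (μ : ℝ) : Prop where
  hasGradientAt (z : WithLp 2 (E × F)) : HasGradientAt f (G z) z
  lipschitz : LipschitzWith L G
  isGreatest (x : E) : IsGreatest (Set.range fun y => f (toLp 2 (x, y))) (Φ x)
  pos : 0 < μ
  pl (z : WithLp 2 (E × F)) : 2 * μ * (Φ z.fst - f z) ≤ ‖(G z).snd‖ ^ 2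

namespace IsSmoothPLMax

variable {f : WithLp 2 (E × F) → ℝ} {G : WithLp 2 (E × F) → WithLp 2 (E × F)} {Φ : E → ℝ}
  {L : ℝ≥0} {μ : ℝ} (hf : IsSmoothPLMax f G Φ L μ)

include hf

lemma le_primal (x : E) (y : F) : f (toLp 2 (x, y)) ≤ Φ x :=
  (hf.isGreatest x).2 ⟨y, rfl⟩

lemma gradient_snd_eq_zero {x : E} {y : F} (hy : f (toLp 2 (x, y)) = Φ x) :
    (G (toLp 2 (x, y))).snd = 0 := by
  have hmax : IsLocalMax (fun y' => f (toLp 2 (x, y'))) y :=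
    Eventually.of_forall fun y' => (hf.le_primal x y').trans hy.ge
  simpa using hmax.hasFDerivAt_eq_zero
    (hasGradientAt_snd_of_toLp (hf.hasGradientAt (toLp 2 (x, y)))).hasFDerivAt

lemma norm_gradient_sub_fst_le (x x' : E) (y : F) :
    ‖G (toLp 2 (x', y)) - G (toLp 2 (x, y))‖ ≤ L * ‖x' - x‖ := by
  refine (hf.lipschitz.norm_sub_le _ _).trans_eq ?_
  rw [← toLp_sub, Prod.mk_sub_mk, sub_self, norm_toLp_fst]

lemma norm_gradient_sub_snd_le (x : E) (y y' : F) :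
    ‖G (toLp 2 (x, y')) - G (toLp 2 (x, y))‖ ≤ L * ‖y' - y‖ := by
  refine (hf.lipschitz.norm_sub_le _ _).trans_eq ?_
  rw [← toLp_sub, Prod.mk_sub_mk, sub_self, norm_toLp_snd]

lemma abs_fst_expansion_le (x x' : E) (y : F) :
    |f (toLp 2 (x', y)) - f (toLp 2 (x, y)) - ⟪(G (toLp 2 (x, y))).fst, x' - x⟫| ≤
      L / 2 * ‖x' - x‖ ^ 2 := by
  simpa [prod_inner_apply, prod_norm_sq_eq_of_L2] using
    abs_sub_sub_inner_le_of_lipschitzWith_gradient hf.hasGradientAt hf.lipschitz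
      (toLp 2 (x, y)) (toLp 2 (x', y))

lemma primal_sub_le {x : E} {y : F} (hy : f (toLp 2 (x, y)) = Φ x) (x' : E) :
    Φ x' - f (toLp 2 (x', y)) ≤ L * (L / μ) / 2 * ‖x' - x‖ ^ 2 := by
  have hpos := hf.pos
  have hlip : ‖(G (toLp 2 (x', y))).snd‖ ≤ L * ‖x' - x‖ := by
    rw [← sub_zero (G (toLp 2 (x', y))).snd, ← hf.gradient_snd_eq_zero hy, ← sub_snd]
    exact (norm_snd_le _ _).trans (hf.norm_gradient_sub_fst_le x x' y)
  have hgap : 2 * μ * (Φ x' - f (toLp 2 (x', y))) ≤ (L * ‖x' - x‖) ^ 2 :=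
    (hf.pl (toLp 2 (x', y))).trans (pow_le_pow_left₀ (norm_nonneg _) hlip 2)
  rw [← le_div_iff₀' (by positivity)] at hgap
  exact hgap.trans_eq (by field_simp)

lemma primal_le_quadratic {x : E} {y : F} (hy : f (toLp 2 (x, y)) = Φ x) (x' : E) :
    Φ x' ≤ Φ x + ⟪(G (toLp 2 (x, y))).fst, x' - x⟫ + L * (L / μ + 1) / 2 * ‖x' - x‖ ^ 2 := by
  linarith [(abs_le.1 (hf.abs_fst_expansion_le x x' y)).2, hf.primal_sub_le hy x']

lemma quadratic_le_primal {x : E} {y : F} (hy : f (toLp 2 (x, y)) = Φ x) (x' : E) :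
    Φ x + ⟪(G (toLp 2 (x, y))).fst, x' - x⟫ - L / 2 * ‖x' - x‖ ^ 2 ≤ Φ x' := by
  linarith [(abs_le.1 (hf.abs_fst_expansion_le x x' y)).1, hf.le_primal x' y]

lemma hasGradientAt_primal {x : E} {y : F} (hy : f (toLp 2 (x, y)) = Φ x) :
    HasGradientAt Φ (G (toLp 2 (x, y))).fst x := by
  have hpos := hf.pos
  rw [hasGradientAt_iff_isLittleO]
  refine Asymptotics.IsBigO.trans_isLittleO ?_ (Asymptotics.isLittleO_pow_sub_sub _ one_lt_two)
  refine .of_bound (L * (L / μ + 1)) (.of_forall fun x' => ?_)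
  have hκ : 0 ≤ L * (L / μ) * ‖x' - x‖ ^ 2 := by positivity
  have hquad : 0 ≤ L * ‖x' - x‖ ^ 2 := by positivity
  rw [Real.norm_eq_abs, Real.norm_of_nonneg (sq_nonneg _), abs_le]
  constructor <;> linarith [hf.primal_le_quadratic hy x', hf.quadratic_le_primal hy x']

lemma exists_eq_primal_norm_sub_sq_le {m : ℝ} (hm : 0 < m) (hmμ : m < μ) (x : E) (y : F) :
    ∃ y', f (toLp 2 (x, y')) = Φ x ∧ m / 2 * ‖y - y'‖ ^ 2 ≤ Φ x - f (toLp 2 (x, y)) := by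
  have hgrad (v : F) : HasGradientAt (fun v' => Φ x - f (toLp 2 (x, v')))
      (-(G (toLp 2 (x, v))).snd) v := by
    rw [hasGradientAt_iff_hasFDerivAt, map_neg]
    exact (hasGradientAt_snd_of_toLp (hf.hasGradientAt _)).hasFDerivAt.const_sub _
  have hlip : LipschitzWith L fun v => -(G (toLp 2 (x, v))).snd :=
    LipschitzWith.of_dist_le_mul fun v v' => by
      rw [dist_neg_neg, dist_eq_norm, dist_eq_norm, ← sub_snd]
      exact (norm_snd_le _ _).trans (hf.norm_gradient_sub_snd_le x v' v)
  have hPL (v : F) : 2 * μ * (Φ x - f (toLp 2 (x, v))) ≤ ‖-(G (toLp 2 (x, v))).snd‖ ^ 2 := by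
    rw [norm_neg]
    exact hf.pl (toLp 2 (x, v))
  obtain ⟨y', hy', hdist⟩ := exists_eq_zero_norm_sub_sq_le_of_PL hgrad hlip
    (fun v => sub_nonneg.2 (hf.le_primal x v)) hPL hm hmμ y
  exact ⟨y', (sub_eq_zero.1 hy').symm, hdist⟩

lemma norm_gradient_primal_sub_sq_le (z : WithLp 2 (E × F)) :
    ‖gradient Φ z.fst - (G z).fst‖ ^ 2 ≤ 2 * L * (L / μ) * (Φ z.fst - f z) := by
  have hpos := hf.pos
  have hbound (m : ℝ) (hm : m ∈ Set.Ioo 0 μ) :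
      m * ‖gradient Φ z.fst - (G z).fst‖ ^ 2 ≤ 2 * L ^ 2 * (Φ z.fst - f z) := by
    obtain ⟨hm0, hmμ⟩ := hm
    obtain ⟨y, hy, hdist⟩ := hf.exists_eq_primal_norm_sub_sq_le hm0 hmμ z.fst z.snd
    have hlip : ‖(G (toLp 2 (z.fst, y))).fst - (G z).fst‖ ≤ L * ‖z.snd - y‖ := by
      rw [← sub_fst, norm_sub_rev z.snd]
      exact (norm_fst_le _ _).trans (hf.norm_gradient_sub_snd_le z.fst z.snd y)
    calc m * ‖gradient Φ z.fst - (G z).fst‖ ^ 2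
        = m * ‖(G (toLp 2 (z.fst, y))).fst - (G z).fst‖ ^ 2 := by
          rw [(hf.hasGradientAt_primal hy).gradient]
      _ ≤ m * (L * ‖z.snd - y‖) ^ 2 := by gcongr
      _ = 2 * L ^ 2 * (m / 2 * ‖z.snd - y‖ ^ 2) := by ring
      _ ≤ 2 * L ^ 2 * (Φ z.fst - f z) := mul_le_mul_of_nonneg_left hdist (by positivity)
  have hlimit : μ * ‖gradient Φ z.fst - (G z).fst‖ ^ 2 ≤ 2 * L ^ 2 * (Φ z.fst - f z) :=
    le_of_tendsto (((continuous_id.mul continuous_const).tendsto μ).mono_left nhdsWithin_le_nhds)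
      (eventually_of_mem (Ioo_mem_nhdsLT hpos) hbound)
  rw [← le_div_iff₀' hpos] at hlimit
  exact hlimit.trans_eq (by field_simp)

lemma norm_gradient_fst_sq_le (z : WithLp 2 (E × F)) :
    ‖(G z).fst‖ ^ 2 ≤ 2 * ‖gradient Φ z.fst‖ ^ 2 + 4 * L * (L / μ) * (Φ z.fst - f z) := by
  have hpar := parallelogram_law_with_norm ℝ (gradient Φ z.fst) (gradient Φ z.fst - (G z).fst)
  rw [sub_sub_cancel] at hpar
  nlinarith [hf.norm_gradient_primal_sub_sq_le z,
    sq_nonneg ‖gradient Φ z.fst + (gradient Φ z.fst - (G z).fst)‖]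

end IsSmoothPLMax

end PrimalFunction

section DescentAscent

section Module

variable {E F : Type*} [AddCommGroup E] [Module ℝ E] [AddCommGroup F] [Module ℝ F]

/-- The linear map turning a gradient into the displacement of simultaneous descent–ascent with step
sizes `α` (against the first component) and `β` (along the second one). -/
def descentAscent (α β : ℝ) : WithLp 2 (E × F) →ₗ[ℝ] WithLp 2 (E × F) where
  toFun v := toLp 2 (-(α • v.fst), β • v.snd)
  map_add' v w := ofLp_injective 2 (Prod.ext (by simp; abel) (by simp))
  map_smul' c v := ofLp_injective 2 (Prod.ext (by simp [smul_comm c]) (by simp [smul_comm c]))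

@[simp] lemma descentAscent_fst (α β : ℝ) (v : WithLp 2 (E × F)) :
    (descentAscent α β v).fst = -(α • v.fst) := rfl

@[simp] lemma descentAscent_snd (α β : ℝ) (v : WithLp 2 (E × F)) :
    (descentAscent α β v).snd = β • v.snd := rfl

lemma descentAscent_mul_inv_smul {c : ℝ} (hc : c ≠ 0) (α β : ℝ) (v : WithLp 2 (E × F)) :
    descentAscent (c * α) (c * β) (c⁻¹ • v) = descentAscent α β v :=
  ofLp_injective 2 (Prod.ext (by simp [smul_smul, hc]) (by simp [smul_smul, hc]))

end Module

variable {E F : Type*} [NormedAddCommGroup E] [InnerProductSpace ℝ E]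
  [NormedAddCommGroup F] [InnerProductSpace ℝ F]

lemma inner_descentAscent (α β : ℝ) (u v : WithLp 2 (E × F)) :
    ⟪u, descentAscent α β v⟫ = β * ⟪u.snd, v.snd⟫ - α * ⟪u.fst, v.fst⟫ := by
  change ⟪u.fst, -(α • v.fst)⟫ + ⟪u.snd, β • v.snd⟫ = _
  rw [inner_neg_right, real_inner_smul_right, real_inner_smul_right, neg_add_eq_sub]

lemma norm_descentAscent_sq (α β : ℝ) (v : WithLp 2 (E × F)) :
    ‖descentAscent α β v‖ ^ 2 = α ^ 2 * ‖v.fst‖ ^ 2 + β ^ 2 * ‖v.snd‖ ^ 2 := by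
  simp [prod_norm_sq_eq_of_L2, norm_smul, mul_pow]

lemma norm_descentAscent_le (α β : ℝ) (v : WithLp 2 (E × F)) :
    ‖descentAscent α β v‖ ≤ √(α ^ 2 + β ^ 2) * ‖v‖ := by
  refine (sq_le_sq₀ (norm_nonneg _) (by positivity)).1 ?_
  rw [mul_pow, Real.sq_sqrt (by positivity), norm_descentAscent_sq, prod_norm_sq_eq_of_L2]
  nlinarith [sq_nonneg (α * ‖v.snd‖), sq_nonneg (β * ‖v.fst‖)]

end DescentAscent

section Potential

variable {E F : Type*} [NormedAddCommGroup E] [InnerProductSpace ℝ E]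
  [NormedAddCommGroup F] [InnerProductSpace ℝ F]

lemma neg_inner_add_inner_add_norm_sq_le {lam : ℝ} (hlam : 0 ≤ lam) (u v p : E) :
    -(lam + 1) * ⟪u, p⟫ + ⟪v, p⟫ + lam / 2 * ‖p‖ ^ 2 ≤
      -((lam - 1) / 2) * ‖u‖ ^ 2 + (lam + 2) * ‖u - v‖ ^ 2 + (2 * lam + 1) / 2 * ‖p - v‖ ^ 2 := by
  have hsquares : (lam + 1) / 2 * ‖(p - v) + (u - v)‖ ^ 2 + 1 / 2 * ‖u + (u - v)‖ ^ 2 =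
      -((lam - 1) / 2) * ‖u‖ ^ 2 + (lam + 2) * ‖u - v‖ ^ 2 + (2 * lam + 1) / 2 * ‖p - v‖ ^ 2 -
        (-(lam + 1) * ⟪u, p⟫ + ⟪v, p⟫ + lam / 2 * ‖p‖ ^ 2) := by
    simp only [← real_inner_self_eq_norm_sq, inner_add_left, inner_add_right, inner_sub_left,
      inner_sub_right]
    rw [real_inner_comm v u, real_inner_comm p u, real_inner_comm p v]
    ring
  rw [← sub_nonneg, ← hsquares]
  positivity

/-- The potential `V_λ = λ (Φ - r) + (Φ - f)` of the minimax problem, on paired arguments. The paper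
takes the reference value `r = inf Φ`; only differences of `V_λ` matter, so `r` is left free. -/
def potential (f : WithLp 2 (E × F) → ℝ) (Φ : E → ℝ) (r lam : ℝ) (z : WithLp 2 (E × F)) : ℝ :=
  lam * (Φ z.fst - r) + (Φ z.fst - f z)

variable [CompleteSpace E] [CompleteSpace F] {f : WithLp 2 (E × F) → ℝ}
  {G : WithLp 2 (E × F) → WithLp 2 (E × F)} {Φ : E → ℝ} {L : ℝ≥0} {μ : ℝ}

namespace IsSmoothPLMax

variable (hf : IsSmoothPLMax f G Φ L μ)
include hf

lemma primal_sub_mul_le (z : WithLp 2 (E × F)) (a : ℝ) (p : E) :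
    Φ (z.fst - a • p) ≤ Φ z.fst - a * ⟪gradient Φ z.fst, p⟫ +
      L * (L / μ + 1) / 2 * (a ^ 2 * ‖p‖ ^ 2) := by
  obtain ⟨y, hy⟩ := (hf.isGreatest z.fst).1
  have h := hf.primal_le_quadratic hy (z.fst - a • p)
  rw [← (hf.hasGradientAt_primal hy).gradient, sub_sub_cancel_left, inner_neg_right,
    real_inner_smul_right, norm_neg, norm_smul, mul_pow, Real.norm_eq_abs, sq_abs] at h
  linarith

lemma le_descentAscent (z p : WithLp 2 (E × F)) (a c : ℝ) :
    f z - a * ⟪(G z).fst, p.fst⟫ + c * ⟪(G z).snd, p.snd⟫ -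
      L / 2 * (a ^ 2 * ‖p.fst‖ ^ 2 + c ^ 2 * ‖p.snd‖ ^ 2) ≤ f (z + descentAscent a c p) := by
  have h := (abs_le.1 (abs_sub_sub_inner_le_of_lipschitzWith_gradient hf.hasGradientAt hf.lipschitz
    z (z + descentAscent a c p))).1
  rw [add_sub_cancel_left, norm_descentAscent_sq, inner_descentAscent] at h
  linarith

lemma potential_descentAscent_le {lam a c : ℝ} (r : ℝ) (hlam : 0 ≤ lam) (ha : 0 ≤ a) (hc : 0 ≤ c)
    (haL : ((lam + 1) * (L / μ + 1) + 1) * L * a ≤ lam) (hcL : L * c ≤ 1)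
    (z p : WithLp 2 (E × F)) :
    potential f Φ r lam (z + descentAscent a c p) ≤ potential f Φ r lam z
      - (lam - 1) / 2 * a * ‖gradient Φ z.fst‖ ^ 2
      + (lam + 2) * a * (2 * L * (L / μ) * (Φ z.fst - f z))
      - c / 2 * ‖(G z).snd‖ ^ 2 + ((2 * lam + 1) * a + c) / 2 * ‖p - G z‖ ^ 2 := by
  have hfst : (z + descentAscent a c p).fst = z.fst - a • p.fst := by
    rw [add_fst, descentAscent_fst, sub_eq_add_neg]
  have hprimal := mul_le_mul_of_nonneg_left (hf.primal_sub_mul_le z a p.fst)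
    (by positivity : 0 ≤ lam + 1)
  have hstep_fst : a * (((lam + 1) * (L / μ + 1) + 1) * L * a * ‖p.fst‖ ^ 2) ≤
      a * (lam * ‖p.fst‖ ^ 2) := by gcongr
  have hstep_snd : c * (L * c * ‖p.snd‖ ^ 2) ≤ c * (1 * ‖p.snd‖ ^ 2) := by gcongr
  have hquad := mul_le_mul_of_nonneg_left
    (neg_inner_add_inner_add_norm_sq_le hlam (gradient Φ z.fst) (G z).fst p.fst) ha
  have hgap := mul_le_mul_of_nonneg_left (hf.norm_gradient_primal_sub_sq_le z)
    (by positivity : 0 ≤ (lam + 2) * a)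
  have hcross := norm_sub_sq_real p.snd (G z).snd
  rw [real_inner_comm] at hcross
  have hcross_snd : 0 ≤ (2 * lam + 1) * a / 2 * ‖p.snd - (G z).snd‖ ^ 2 := by positivity
  have hcross_fst : 0 ≤ c / 2 * ‖p.fst - (G z).fst‖ ^ 2 := by positivity
  rw [potential, potential, hfst, prod_norm_sq_eq_of_L2 (p - G z), sub_fst, sub_snd]
  linear_combination hf.le_descentAscent z p a c + hprimal + hstep_fst / 2 + hstep_snd / 2 +
    hquad + hgap + hcross_snd + hcross_fst - c / 2 * hcross

end IsSmoothPLMax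

end Potential

section Sampling

variable {ι : Type*} [Fintype ι] [DecidableEq ι]

lemma expect_perm_apply {M : Type*} [AddCommMonoid M] [Module ℚ≥0 M] (φ : ι → M) (i : ι) :
    𝔼 σ : Equiv.Perm ι, φ (σ i) = 𝔼 j, φ j := by
  have hinv (j : ι) : 𝔼 σ : Equiv.Perm ι, φ (σ j) = 𝔼 σ : Equiv.Perm ι, φ (σ i) :=
    Fintype.expect_equiv (Equiv.mulRight (Equiv.swap i j)) _ _ fun σ => by simp
  have : Nonempty ι := ⟨i⟩
  calc 𝔼 σ : Equiv.Perm ι, φ (σ i)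
      = 𝔼 j, 𝔼 σ : Equiv.Perm ι, φ (σ j) := by simp only [hinv, Fintype.expect_const]
    _ = 𝔼 σ : Equiv.Perm ι, 𝔼 j, φ (σ j) := Finset.expect_comm ..
    _ = 𝔼 σ : Equiv.Perm ι, 𝔼 j, φ j := by
      simp only [fun σ : Equiv.Perm ι => Fintype.expect_equiv σ (φ ∘ σ) φ fun _ => rfl,
        ← Function.comp_apply (f := φ)]
    _ = 𝔼 j, φ j := Fintype.expect_const _

variable {V : Type*} [NormedAddCommGroup V] [InnerProductSpace ℝ V] {a : ι → V}

lemma expect_perm_inner_apply_of_ne (ha : ∑ i, a i = 0) {i j : ι} (hij : i ≠ j) :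
    (Fintype.card ι - 1 : ℝ) * 𝔼 σ : Equiv.Perm ι, ⟪a (σ i), a (σ j)⟫ = -𝔼 k, ‖a k‖ ^ 2 := by
  have hinv (k : ι) (hk : k ∈ Finset.univ.erase i) :
      𝔼 σ : Equiv.Perm ι, ⟪a (σ i), a (σ k)⟫ = 𝔼 σ : Equiv.Perm ι, ⟪a (σ i), a (σ j)⟫ :=
    Fintype.expect_equiv (Equiv.mulRight (Equiv.swap j k)) _ _ fun σ => by
      simp [Equiv.swap_apply_of_ne_of_ne hij (Finset.ne_of_mem_erase hk).symm]
  have hrow : ∑ k, 𝔼 σ : Equiv.Perm ι, ⟪a (σ i), a (σ k)⟫ = 0 := by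
    simp only [← Finset.expect_sum_comm, ← inner_sum, Equiv.sum_comp _ a, ha, inner_zero_right,
      Finset.expect_const_zero]
  have hdiag : 𝔼 σ : Equiv.Perm ι, ⟪a (σ i), a (σ i)⟫ = 𝔼 k, ‖a k‖ ^ 2 := by
    simp only [real_inner_self_eq_norm_sq]
    exact expect_perm_apply (fun k => ‖a k‖ ^ 2) i
  rw [← Finset.add_sum_erase _ _ (Finset.mem_univ i), Finset.sum_congr rfl hinv, Finset.sum_const,
    nsmul_eq_mul, Finset.cast_card_erase_of_mem (Finset.mem_univ i), hdiag,
    Finset.card_univ] at hrow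
  linarith

lemma expect_perm_norm_sum_sq (ha : ∑ i, a i = 0) (T : Finset ι) :
    (Fintype.card ι - 1 : ℝ) * 𝔼 σ : Equiv.Perm ι, ‖∑ j ∈ T, a (σ j)‖ ^ 2 =
      T.card * (Fintype.card ι - T.card) * 𝔼 i, ‖a i‖ ^ 2 := by
  have hentry (i j : ι) : (Fintype.card ι - 1 : ℝ) * 𝔼 σ : Equiv.Perm ι, ⟪a (σ i), a (σ j)⟫ =
      (if i = j then Fintype.card ι * 𝔼 k, ‖a k‖ ^ 2 else 0) - 𝔼 k, ‖a k‖ ^ 2 := by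
    split_ifs with hij
    · simp only [hij, real_inner_self_eq_norm_sq, expect_perm_apply fun k => ‖a k‖ ^ 2]
      ring
    · rw [expect_perm_inner_apply_of_ne ha hij, zero_sub]
  calc (Fintype.card ι - 1 : ℝ) * 𝔼 σ : Equiv.Perm ι, ‖∑ j ∈ T, a (σ j)‖ ^ 2
      = ∑ i ∈ T, ∑ j ∈ T,
          (Fintype.card ι - 1 : ℝ) * 𝔼 σ : Equiv.Perm ι, ⟪a (σ i), a (σ j)⟫ := by
        simp only [← real_inner_self_eq_norm_sq, sum_inner, inner_sum, ← Finset.mul_sum,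
          ← Finset.expect_sum_comm]
        exact congrArg _ (Finset.expect_congr rfl fun σ _ => Finset.sum_comm)
    _ = T.card * (Fintype.card ι - T.card) * 𝔼 i, ‖a i‖ ^ 2 := by
        simp only [hentry, Finset.sum_sub_distrib, Finset.sum_ite_eq, Finset.sum_ite_mem,
          Finset.inter_self, Finset.sum_const, nsmul_eq_mul]
        ring

end Sampling

section BatchMean

variable {n : ℕ}

section Module

variable {V W : Type*} [AddCommGroup V] [Module ℝ V] [AddCommGroup W] [Module ℝ W]

/-- The mean of `a` over the `t`-th mini-batch of size `b`, counted from `0`, in the order `σ`. -/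
noncomputable def batchMean (b : ℕ) (σ : Equiv.Perm (Fin n)) (t : ℕ) (a : Fin n → V) : V :=
  (b : ℝ)⁻¹ • ∑ j : Fin n with b * t ≤ Fin.val j ∧ Fin.val j < b * (t + 1), a (σ j)

lemma map_batchMean (D : V →ₗ[ℝ] W) (b : ℕ) (σ : Equiv.Perm (Fin n)) (t : ℕ) (a : Fin n → V) :
    D (batchMean b σ t a) = batchMean b σ t fun i => D (a i) := by
  rw [batchMean, map_smul, map_sum, batchMean]

lemma batchMean_sub_batchMean (b : ℕ) (σ : Equiv.Perm (Fin n)) (t : ℕ) (a c : Fin n → V) :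
    batchMean b σ t a - batchMean b σ t c = batchMean b σ t fun i => a i - c i := by
  rw [batchMean, batchMean, ← smul_sub, ← Finset.sum_sub_distrib, batchMean]

lemma sum_range_batchMean (b : ℕ) (σ : Equiv.Perm (Fin n)) (t : ℕ) (a : Fin n → V) :
    ∑ s ∈ Finset.range t, batchMean b σ s a =
      (b : ℝ)⁻¹ • ∑ j : Fin n with Fin.val j < b * t, a (σ j) := by
  induction t with
  | zero => simp
  | succ t ih =>
    have : b * t ≤ b * (t + 1) := Nat.mul_le_mul_left b t.le_succ
    rw [Finset.sum_range_succ, ih, batchMean, ← smul_add,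
      ← Finset.sum_union (Finset.disjoint_filter.2 fun j _ hj => by lia), ← Finset.filter_or]
    congr 3
    ext j
    lia

variable {b q : ℕ} {a : Fin n → V} {v : V}

lemma sum_range_batchMean_sub_smul (hb : b ≠ 0) {t : ℕ} (ht : b * t ≤ n)
    (σ : Equiv.Perm (Fin n)) (a : Fin n → V) (v : V) :
    ∑ s ∈ Finset.range t, batchMean b σ s a - (t : ℝ) • v =
      (b : ℝ)⁻¹ • ∑ j : Fin n with Fin.val j < b * t, (a (σ j) - v) := by
  rw [sum_range_batchMean, Finset.sum_sub_distrib, Finset.sum_const, Fin.card_filter_val_lt,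
    min_eq_right ht, smul_sub, ← Nat.cast_smul_eq_nsmul ℝ, Nat.cast_mul, smul_smul,
    inv_mul_cancel_left₀ (Nat.cast_ne_zero.2 hb)]

lemma sum_sub_eq_zero (hv : (n : ℝ) • v = ∑ i, a i) : ∑ i, (a i - v) = 0 := by
  rw [Finset.sum_sub_distrib, ← hv, Finset.sum_const, Finset.card_univ, Fintype.card_fin,
    Nat.cast_smul_eq_nsmul, sub_self]

lemma sum_range_batchMean_eq_smul (hb : b ≠ 0) (hq : n = b * q) (hv : (n : ℝ) • v = ∑ i, a i)
    (σ : Equiv.Perm (Fin n)) : ∑ s ∈ Finset.range q, batchMean b σ s a = (q : ℝ) • v := by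
  rw [← sub_eq_zero, sum_range_batchMean_sub_smul hb hq.ge,
    Finset.filter_true_of_mem fun j _ => j.2.trans_eq hq, Equiv.sum_comp σ fun i => a i - v,
    sum_sub_eq_zero hv, smul_zero]

end Module

variable {H V : Type*} [NormedAddCommGroup H] [NormedAddCommGroup V] [NormedSpace ℝ V]

lemma card_batch_le (b t : ℕ) :
    ({j : Fin n | b * t ≤ (j : ℕ) ∧ (j : ℕ) < b * (t + 1)} : Finset (Fin n)).card ≤ b := by
  refine (Finset.card_le_card_of_injOn (t := Finset.Ico (b * t) (b * (t + 1))) Fin.val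
    (fun j hj => ?_) Fin.val_injective.injOn).trans_eq ?_
  · simpa using hj
  · rw [Nat.card_Ico, mul_add_one, add_tsub_cancel_left]

lemma norm_batchMean_le {C : ℝ} (hC : 0 ≤ C) {a : Fin n → V} (ha : ∀ i, ‖a i‖ ≤ C) (b : ℕ)
    (σ : Equiv.Perm (Fin n)) (t : ℕ) : ‖batchMean b σ t a‖ ≤ C := by
  rw [batchMean, norm_smul, norm_inv, Real.norm_natCast]
  refine inv_mul_le_of_le_mul₀ b.cast_nonneg hC ?_
  refine (norm_sum_le_of_le _ fun j _ => ha (σ j)).trans ?_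
  rw [Finset.sum_const, nsmul_eq_mul]
  gcongr
  exact card_batch_le b t

lemma norm_sum_batchMean_sub_sq_le {g : Fin n → H → V} {K : ℝ≥0}
    (hg : ∀ i, LipschitzWith K (g i)) (b : ℕ) (σ : Equiv.Perm (Fin n)) (ζ : ℕ → H) (z : H) (t : ℕ) :
    ‖∑ s ∈ Finset.range t, (batchMean b σ s (g · (ζ s)) - batchMean b σ s (g · z))‖ ^ 2 ≤
      t * (K ^ 2 * ∑ s ∈ Finset.range t, ‖ζ s - z‖ ^ 2) := by
  calc ‖∑ s ∈ Finset.range t, (batchMean b σ s (g · (ζ s)) - batchMean b σ s (g · z))‖ ^ 2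
      ≤ (∑ s ∈ Finset.range t, K * ‖ζ s - z‖) ^ 2 := by
        refine pow_le_pow_left₀ (norm_nonneg _) (norm_sum_le_of_le _ fun s _ => ?_) 2
        rw [batchMean_sub_batchMean]
        exact norm_batchMean_le (by positivity) (fun i => (hg i).norm_sub_le _ _) b σ s
    _ ≤ t * ∑ s ∈ Finset.range t, (K * ‖ζ s - z‖) ^ 2 := by
        simpa using sq_sum_le_card_mul_sum_sq (s := Finset.range t) (f := fun s => K * ‖ζ s - z‖)
    _ = t * (K ^ 2 * ∑ s ∈ Finset.range t, ‖ζ s - z‖ ^ 2) := by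
        simp only [mul_pow, Finset.mul_sum]

lemma norm_inv_smul_sum_batchMean_sub_sq_le {g : Fin n → H → V} {K : ℝ≥0}
    (hg : ∀ i, LipschitzWith K (g i)) (hn : n ≠ 0) (hq : n = b * q)
    {z : H} (hv : (n : ℝ) • v = ∑ i, g i z) (σ : Equiv.Perm (Fin n)) (ζ : ℕ → H) :
    ‖(q : ℝ)⁻¹ • ∑ s ∈ Finset.range q, batchMean b σ s (g · (ζ s)) - v‖ ^ 2 ≤
      K ^ 2 / q * ∑ s ∈ Finset.range q, ‖ζ s - z‖ ^ 2 := by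
  obtain ⟨hb, hq0⟩ : b ≠ 0 ∧ q ≠ 0 := by rwa [hq, mul_ne_zero_iff] at hn
  have hqR : (q : ℝ) ≠ 0 := Nat.cast_ne_zero.2 hq0
  rw [← inv_smul_smul₀ hqR v, ← sum_range_batchMean_eq_smul hb hq hv σ, ← smul_sub,
    ← Finset.sum_sub_distrib, norm_smul, mul_pow, norm_inv, Real.norm_natCast]
  refine (mul_le_mul_of_nonneg_left (norm_sum_batchMean_sub_sq_le hg b σ ζ z q)
    (by positivity)).trans_eq ?_
  field_simp

end BatchMean

section SamplingVariance

variable {n b q : ℕ} {V : Type*} [NormedAddCommGroup V] [InnerProductSpace ℝ V]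
  {a : Fin n → V} {v : V}

lemma expect_norm_sum_batchMean_sub_smul_sq (hb : b ≠ 0) (hq : n = b * q) {t : ℕ} (ht : t ≤ q)
    (hv : (n : ℝ) • v = ∑ i, a i) :
    (n - 1 : ℝ) * 𝔼 σ : Equiv.Perm (Fin n),
        ‖∑ s ∈ Finset.range t, batchMean b σ s a - (t : ℝ) • v‖ ^ 2 =
      t * (q - t) * 𝔼 i, ‖a i - v‖ ^ 2 := by
  have hbR : (b : ℝ) ≠ 0 := Nat.cast_ne_zero.2 hb
  have hbt : b * t ≤ n := hq ▸ Nat.mul_le_mul_left b ht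
  have hvar := expect_perm_norm_sum_sq (sum_sub_eq_zero hv) {j : Fin n | (j : ℕ) < b * t}
  rw [Fin.card_filter_val_lt, min_eq_right hbt, Fintype.card_fin] at hvar
  simp only [sum_range_batchMean_sub_smul hb hbt, norm_smul, mul_pow, ← Finset.mul_expect]
  have hqR : (n : ℝ) = b * q := mod_cast hq
  rw [mul_left_comm, hvar, hqR, norm_inv, Real.norm_natCast, Nat.cast_mul]
  field_simp

end SamplingVariance

section ReshuffledEpoch

variable {n : ℕ} {H : Type*} [AddCommGroup H] [Module ℝ H]

/-- The iterates of one epoch of `z ↦ z + h i z`, where the increments `h i` are averaged over the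
successive mini-batches of size `b` in the order `σ`. -/
noncomputable def reshuffledEpoch (b : ℕ) (h : Fin n → H → H) (σ : Equiv.Perm (Fin n)) (z : H) :
    ℕ → H
  | 0 => z
  | t + 1 => reshuffledEpoch b h σ z t + batchMean b σ t (h · (reshuffledEpoch b h σ z t))

lemma reshuffledEpoch_eq_add_sum (b : ℕ) (h : Fin n → H → H) (σ : Equiv.Perm (Fin n)) (z : H)
    (t : ℕ) :
    reshuffledEpoch b h σ z t =
      z + ∑ s ∈ Finset.range t, batchMean b σ s (h · (reshuffledEpoch b h σ z s)) := by
  induction t with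
  | zero => simp [reshuffledEpoch]
  | succ t ih => rw [Finset.sum_range_succ, ← add_assoc, ← ih, reshuffledEpoch]

end ReshuffledEpoch

section Drift

lemma sum_range_cast (q : ℕ) : ∑ t ∈ Finset.range q, (t : ℝ) = q * (q - 1) / 2 := by
  induction q with
  | zero => simp
  | succ q ih =>
    rw [Finset.sum_range_succ, ih]
    push_cast
    ring

lemma sum_range_cast_sq (q : ℕ) :
    ∑ t ∈ Finset.range q, (t : ℝ) ^ 2 = q * (q - 1) * (2 * q - 1) / 6 := by
  induction q with
  | zero => simp
  | succ q ih =>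
    rw [Finset.sum_range_succ, ih]
    push_cast
    ring

lemma natCast_mul_natCast_sub_one_nonneg (q : ℕ) : (0 : ℝ) ≤ q * (q - 1) := by
  rcases q.eq_zero_or_pos with rfl | hq
  · simp
  · exact mul_nonneg q.cast_nonneg (sub_nonneg.2 (mod_cast hq))

lemma sum_range_le_two_mul_of_feedback {q : ℕ} {D R : ℕ → ℝ} {c : ℝ} (hc : 0 ≤ c)
    (hD : ∀ t, 0 ≤ D t) (hcq : c * (q * (q - 1)) ≤ 1)
    (h : ∀ t < q, D t ≤ c * t * ∑ s ∈ Finset.range t, D s + R t) :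
    ∑ t ∈ Finset.range q, D t ≤ 2 * ∑ t ∈ Finset.range q, R t := by
  have hstep (t : ℕ) (ht : t ∈ Finset.range q) :
      D t ≤ c * t * ∑ s ∈ Finset.range q, D s + R t := by
    refine (h t (Finset.mem_range.1 ht)).trans ?_
    gcongr
    · exact fun s _ _ => hD s
    · exact (Finset.mem_range.1 ht).le
  have hsum := Finset.sum_le_sum hstep
  rw [Finset.sum_add_distrib, ← Finset.sum_mul, ← Finset.mul_sum, sum_range_cast] at hsum
  have hfeedback := mul_le_mul_of_nonneg_right hcq
    (Finset.sum_nonneg fun t (_ : t ∈ Finset.range q) => hD t)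
  linarith

lemma norm_add₃_sq_le {V : Type*} [SeminormedAddGroup V] (a b c : V) :
    ‖a + b + c‖ ^ 2 ≤ 3 * (‖a‖ ^ 2 + ‖b‖ ^ 2 + ‖c‖ ^ 2) := by
  have h := pow_le_pow_left₀ (norm_nonneg _) (norm_add₃_le (a := a) (b := b) (c := c)) 2
  nlinarith [sq_nonneg (‖a‖ - ‖b‖), sq_nonneg (‖b‖ - ‖c‖), sq_nonneg (‖a‖ - ‖c‖)]

variable {n : ℕ} {H : Type*} [NormedAddCommGroup H] [NormedSpace ℝ H]

/-- The total squared distance of the first `q` iterates of an epoch from its starting point. -/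
noncomputable def epochDrift (b q : ℕ) (h : Fin n → H → H) (σ : Equiv.Perm (Fin n)) (z : H) : ℝ :=
  ∑ t ∈ Finset.range q, ‖reshuffledEpoch b h σ z t - z‖ ^ 2

variable {h : Fin n → H → H}

lemma norm_reshuffledEpoch_sub_sq_le {K : ℝ≥0} (hh : ∀ i, LipschitzWith K (h i)) (b : ℕ)
    (σ : Equiv.Perm (Fin n)) (z v : H) (t : ℕ) :
    ‖reshuffledEpoch b h σ z t - z‖ ^ 2 ≤
      3 * K ^ 2 * t * ∑ s ∈ Finset.range t, ‖reshuffledEpoch b h σ z s - z‖ ^ 2 +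
        3 * (‖∑ s ∈ Finset.range t, batchMean b σ s (h · z) - (t : ℝ) • v‖ ^ 2 +
          t ^ 2 * ‖v‖ ^ 2) := by
  have hsplit : reshuffledEpoch b h σ z t - z =
      ∑ s ∈ Finset.range t, (batchMean b σ s (h · (reshuffledEpoch b h σ z s)) -
          batchMean b σ s (h · z)) +
        (∑ s ∈ Finset.range t, batchMean b σ s (h · z) - (t : ℝ) • v) + (t : ℝ) • v := by
    rw [reshuffledEpoch_eq_add_sum b h σ z t, Finset.sum_sub_distrib]
    abel
  have htri := norm_add₃_sq_le
    (∑ s ∈ Finset.range t, (batchMean b σ s (h · (reshuffledEpoch b h σ z s)) -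
      batchMean b σ s (h · z)))
    (∑ s ∈ Finset.range t, batchMean b σ s (h · z) - (t : ℝ) • v) ((t : ℝ) • v)
  rw [← hsplit, norm_smul, mul_pow, Real.norm_natCast] at htri
  linarith [norm_sum_batchMean_sub_sq_le hh b σ (reshuffledEpoch b h σ z) z t]

lemma epochDrift_le {q : ℕ} {K : ℝ≥0} (hh : ∀ i, LipschitzWith K (h i))
    (hK : 3 * K ^ 2 * (q * (q - 1) : ℝ) ≤ 1) (b : ℕ) (σ : Equiv.Perm (Fin n)) (z v : H) :
    epochDrift b q h σ z ≤ 2 * ∑ t ∈ Finset.range q,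
      3 * (‖∑ s ∈ Finset.range t, batchMean b σ s (h · z) - (t : ℝ) • v‖ ^ 2 + t ^ 2 * ‖v‖ ^ 2) :=
  sum_range_le_two_mul_of_feedback (by positivity) (fun _ => sq_nonneg _) hK
    fun t _ => norm_reshuffledEpoch_sub_sq_le hh b σ z v t

end Drift

section ExpectedDrift

variable {n b q : ℕ} {H : Type*} [NormedAddCommGroup H] [InnerProductSpace ℝ H] {h : Fin n → H → H}
  {z v : H}

lemma expect_epochDrift_le {K : ℝ≥0} (hn : 1 < n) (hq : n = b * q)
    (hh : ∀ i, LipschitzWith K (h i)) (hK : 3 * K ^ 2 * (q * (q - 1) : ℝ) ≤ 1)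
    (hv : (n : ℝ) • v = ∑ i, h i z) :
    𝔼 σ : Equiv.Perm (Fin n), epochDrift b q h σ z ≤
      2 * q ^ 2 * (q - 1) / (n - 1) * 𝔼 i, ‖h i z - v‖ ^ 2 + 2 * q ^ 3 * ‖v‖ ^ 2 := by
  obtain ⟨hb, hq0⟩ : b ≠ 0 ∧ q ≠ 0 := by rw [← mul_ne_zero_iff, ← hq]; lia
  have hn1 : (0 : ℝ) < n - 1 := sub_pos.2 (mod_cast hn)
  have hq1 : (0 : ℝ) ≤ q - 1 := sub_nonneg.2 (mod_cast Nat.one_le_iff_ne_zero.2 hq0)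
  set S := 𝔼 i, ‖h i z - v‖ ^ 2
  have : 0 ≤ S := Finset.expect_nonneg fun i _ => sq_nonneg _
  have hnoise (t : ℕ) (ht : t ∈ Finset.range q) : 𝔼 σ : Equiv.Perm (Fin n),
      ‖∑ s ∈ Finset.range t, batchMean b σ s (h · z) - (t : ℝ) • v‖ ^ 2 =
        (q * t - t ^ 2) * (S / (n - 1)) := by
    rw [← mul_div_assoc, eq_div_iff hn1.ne', mul_comm,
      expect_norm_sum_batchMean_sub_smul_sq hb hq (Finset.mem_range.1 ht).le hv]
    ring
  calc 𝔼 σ : Equiv.Perm (Fin n), epochDrift b q h σ z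
      ≤ 𝔼 σ : Equiv.Perm (Fin n), 2 * ∑ t ∈ Finset.range q, 3 *
          (‖∑ s ∈ Finset.range t, batchMean b σ s (h · z) - (t : ℝ) • v‖ ^ 2 + t ^ 2 * ‖v‖ ^ 2) :=
        Finset.expect_le_expect fun σ _ => epochDrift_le hh hK b σ z v
    _ = 2 * ∑ t ∈ Finset.range q,
          3 * ((q * t - t ^ 2) * (S / (n - 1)) + (t : ℝ) ^ 2 * ‖v‖ ^ 2) := by
        simp only [← Finset.mul_expect, Finset.expect_sum_comm, Finset.expect_add_distrib,
          Fintype.expect_const]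
        rw [Finset.sum_congr rfl fun t ht => by rw [hnoise t ht]]
    _ = S / (n - 1) * (q * (q - 1) * (q + 1)) + ‖v‖ ^ 2 * (q * (q - 1) * (2 * q - 1)) := by
        simp only [← Finset.mul_sum, Finset.sum_add_distrib, ← Finset.sum_mul,
          Finset.sum_sub_distrib, sum_range_cast, sum_range_cast_sq]
        ring
    _ ≤ S / (n - 1) * (q * (q - 1) * (2 * q)) + ‖v‖ ^ 2 * (q * q * (2 * q)) := by
        gcongr <;> linarith
    _ = 2 * q ^ 2 * (q - 1) / (n - 1) * S + 2 * q ^ 3 * ‖v‖ ^ 2 := by ring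

end ExpectedDrift

section Recurrence

variable {E F : Type*} [NormedAddCommGroup E] [InnerProductSpace ℝ E]
  [NormedAddCommGroup F] [InnerProductSpace ℝ F]

lemma lipschitzWith_descentAscent_comp {g : WithLp 2 (E × F) → WithLp 2 (E × F)} {L : ℝ≥0}
    (hg : LipschitzWith L g) (α β : ℝ) :
    LipschitzWith (Real.toNNReal √(α ^ 2 + β ^ 2) * L) fun z => descentAscent α β (g z) :=
  (AddMonoidHomClass.lipschitz_of_bound _ _ (norm_descentAscent_le α β)).comp hg

variable {n b q : ℕ} {g : Fin n → WithLp 2 (E × F) → WithLp 2 (E × F)}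
  {G : WithLp 2 (E × F) → WithLp 2 (E × F)} {L : ℝ≥0}

lemma expect_norm_descentAscent_sub_sq_le {A B : ℝ} (α β : ℝ) {v : WithLp 2 (E × F)}
    {a : Fin n → WithLp 2 (E × F)}
    (hfst : 𝔼 i, ‖(a i - v).fst‖ ^ 2 ≤ A * ‖v.fst‖ ^ 2 + B)
    (hsnd : 𝔼 i, ‖(a i - v).snd‖ ^ 2 ≤ A * ‖v.snd‖ ^ 2 + B) :
    𝔼 i, ‖descentAscent α β (a i) - descentAscent α β v‖ ^ 2 ≤
      A * ‖descentAscent α β v‖ ^ 2 + (α ^ 2 + β ^ 2) * B := by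
  simp only [← map_sub, norm_descentAscent_sq, Finset.expect_add_distrib, ← Finset.mul_expect]
  linarith [mul_le_mul_of_nonneg_left hfst (sq_nonneg α),
    mul_le_mul_of_nonneg_left hsnd (sq_nonneg β)]

lemma expect_epochDrift_descentAscent_le {A B α β : ℝ} (hn : 1 < n) (hq : n = b * q)
    (hg : ∀ i, LipschitzWith L (g i))
    (hαβ : 3 * ((α ^ 2 + β ^ 2) * L ^ 2) * (q * (q - 1)) ≤ 1)
    {z v : WithLp 2 (E × F)} (hv : (n : ℝ) • v = ∑ i, g i z)
    (hfst : 𝔼 i, ‖(g i z - v).fst‖ ^ 2 ≤ A * ‖v.fst‖ ^ 2 + B)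
    (hsnd : 𝔼 i, ‖(g i z - v).snd‖ ^ 2 ≤ A * ‖v.snd‖ ^ 2 + B) :
    𝔼 σ, epochDrift b q (fun i w => descentAscent α β (g i w)) σ z ≤
      2 * q * (q ^ 2 + q * (q - 1) / (n - 1) * A) * ‖descentAscent α β v‖ ^ 2 +
        2 * q ^ 2 * (q - 1) / (n - 1) * ((α ^ 2 + β ^ 2) * B) := by
  have hK : ((Real.toNNReal √(α ^ 2 + β ^ 2) * L : ℝ≥0) : ℝ) ^ 2 = (α ^ 2 + β ^ 2) * L ^ 2 := by
    rw [NNReal.coe_mul, Real.coe_toNNReal _ (Real.sqrt_nonneg _), mul_pow,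
      Real.sq_sqrt (by positivity)]
  have hmean : (n : ℝ) • descentAscent α β v = ∑ i, descentAscent α β (g i z) := by
    rw [← map_smul, hv, map_sum]
  have hn1 : (0 : ℝ) < n - 1 := sub_pos.2 (mod_cast hn)
  have hq1 : (0 : ℝ) ≤ q * (q - 1) := natCast_mul_natCast_sub_one_nonneg q
  have hcoef : 0 ≤ 2 * q * ((q : ℝ) * (q - 1)) / (n - 1) := by positivity
  have hdrift := expect_epochDrift_le hn hq
    (fun i => lipschitzWith_descentAscent_comp (hg i) α β) (by rwa [hK]) hmean
  have hvar := mul_le_mul_of_nonneg_left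
    (expect_norm_descentAscent_sub_sq_le α β hfst hsnd) hcoef
  linear_combination hdrift + hvar

variable [CompleteSpace E] [CompleteSpace F] {f : WithLp 2 (E × F) → ℝ} {Φ : E → ℝ} {μ : ℝ}

namespace IsSmoothPLMax

variable (hf : IsSmoothPLMax f G Φ L μ) {α β lam r : ℝ}
include hf

lemma potential_reshuffledEpoch_le (hn : n ≠ 0) (hq : n = b * q)
    (hg : ∀ i, LipschitzWith L (g i)) (hα : 0 ≤ α) (hβ : 0 ≤ β) (hlam : 0 ≤ lam)
    (hαL : ((lam + 1) * (L / μ + 1) + 1) * L * (q * α) ≤ lam) (hβL : L * (q * β) ≤ 1)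
    {z : WithLp 2 (E × F)} (hG : (n : ℝ) • G z = ∑ i, g i z) (σ : Equiv.Perm (Fin n)) :
    potential f Φ r lam (reshuffledEpoch b (fun i w => descentAscent α β (g i w)) σ z q) ≤
      potential f Φ r lam z - (lam - 1) / 2 * (q * α) * ‖gradient Φ z.fst‖ ^ 2
        + (lam + 2) * (q * α) * (2 * L * (L / μ) * (Φ z.fst - f z))
        - q * β / 2 * ‖(G z).snd‖ ^ 2
        + ((2 * lam + 1) * α + β) / 2 * L ^ 2 *
          epochDrift b q (fun i w => descentAscent α β (g i w)) σ z := by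
  have hq0 : (q : ℝ) ≠ 0 := by
    rw [Nat.cast_ne_zero]
    rintro rfl
    exact hn hq
  set ζ := reshuffledEpoch b (fun i w => descentAscent α β (g i w)) σ z
  set p := (q : ℝ)⁻¹ • ∑ s ∈ Finset.range q, batchMean b σ s (g · (ζ s))
  have hend : ζ q = z + descentAscent (q * α) (q * β) p := by
    rw [descentAscent_mul_inv_smul hq0, map_sum]
    simp only [map_batchMean]
    exact reshuffledEpoch_eq_add_sum ..
  have herror := mul_le_mul_of_nonneg_left
    (norm_inv_smul_sum_batchMean_sub_sq_le hg hn hq hG σ ζ)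
    (by positivity : 0 ≤ ((2 * lam + 1) * (q * α) + q * β) / 2)
  have hscale : ((2 * lam + 1) * (q * α) + q * β) / 2 *
      (L ^ 2 / q * ∑ s ∈ Finset.range q, ‖ζ s - z‖ ^ 2) =
        ((2 * lam + 1) * α + β) / 2 * L ^ 2 * ∑ s ∈ Finset.range q, ‖ζ s - z‖ ^ 2 := by
    field_simp
  rw [hend, epochDrift]
  linarith [hf.potential_descentAscent_le r hlam (by positivity : 0 ≤ q * α)
    (by positivity : 0 ≤ q * β) hαL hβL z p]

lemma expect_potential_reshuffledEpoch_le {A B : ℝ} (hn : 1 < n) (hq : n = b * q)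
    (hg : ∀ i, LipschitzWith L (g i)) (hα : 0 ≤ α) (hβ : 0 ≤ β) (hlam : 0 ≤ lam)
    (hαL : ((lam + 1) * (L / μ + 1) + 1) * L * (q * α) ≤ lam) (hβL : L * (q * β) ≤ 1)
    (hαβ : 3 * ((α ^ 2 + β ^ 2) * L ^ 2) * (q * (q - 1)) ≤ 1)
    {z : WithLp 2 (E × F)} (hG : (n : ℝ) • G z = ∑ i, g i z)
    (hfst : 𝔼 i, ‖(g i z - G z).fst‖ ^ 2 ≤ A * ‖(G z).fst‖ ^ 2 + B)
    (hsnd : 𝔼 i, ‖(g i z - G z).snd‖ ^ 2 ≤ A * ‖(G z).snd‖ ^ 2 + B) :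
    𝔼 σ, potential f Φ r lam (reshuffledEpoch b (fun i w => descentAscent α β (g i w)) σ z q) ≤
      potential f Φ r lam z - (lam - 1) / 2 * (q * α) * ‖gradient Φ z.fst‖ ^ 2
        + (lam + 2) * (q * α) * (2 * L * (L / μ) * (Φ z.fst - f z))
        - q * β / 2 * ‖(G z).snd‖ ^ 2
        + ((2 * lam + 1) * α + β) / 2 * L ^ 2 *
          (2 * q * (q ^ 2 + q * (q - 1) / (n - 1) * A) *
              (α ^ 2 * ‖(G z).fst‖ ^ 2 + β ^ 2 * ‖(G z).snd‖ ^ 2) +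
            2 * q ^ 2 * (q - 1) / (n - 1) * ((α ^ 2 + β ^ 2) * B)) := by
  refine (Finset.expect_le_expect fun σ _ => hf.potential_reshuffledEpoch_le (by lia) hq hg hα hβ
    hlam hαL hβL hG σ).trans ?_
  rw [Finset.expect_add_distrib, Fintype.expect_const, ← Finset.mul_expect,
    ← norm_descentAscent_sq]
  gcongr
  exact expect_epochDrift_descentAscent_le hn hq hg hαβ hG hfst hsnd

lemma expect_potential_reshuffledEpoch_sub_le {A B : ℝ} (hn : 1 < n) (hq : n = b * q)
    (hg : ∀ i, LipschitzWith L (g i)) (hA : 0 ≤ A) (hα : 0 ≤ α) (hβ : 0 ≤ β) (hlam : 0 ≤ lam)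
    (hαL : ((lam + 1) * (L / μ + 1) + 1) * L * (q * α) ≤ lam) (hβL : L * (q * β) ≤ 1)
    (hαβ : 3 * ((α ^ 2 + β ^ 2) * L ^ 2) * (q * (q - 1)) ≤ 1)
    (hascent : 0 ≤ q * β - 2 * L ^ 2 * q * (q ^ 2 + q * (q - 1) / (n - 1) * A) *
      ((2 * lam + 1) * α + β) * β ^ 2)
    {z : WithLp 2 (E × F)} (hG : (n : ℝ) • G z = ∑ i, g i z)
    (hfst : 𝔼 i, ‖(g i z - G z).fst‖ ^ 2 ≤ A * ‖(G z).fst‖ ^ 2 + B)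
    (hsnd : 𝔼 i, ‖(g i z - G z).snd‖ ^ 2 ≤ A * ‖(G z).snd‖ ^ 2 + B) :
    𝔼 σ, potential f Φ r lam (reshuffledEpoch b (fun i w => descentAscent α β (g i w)) σ z q) -
        potential f Φ r lam z ≤
      -((lam - 1) / 2 * (q * α) - 2 * L ^ 2 * q * (q ^ 2 + q * (q - 1) / (n - 1) * A) *
          ((2 * lam + 1) * α + β) * α ^ 2) * ‖gradient Φ z.fst‖ ^ 2
        - (μ * q * β - 2 * (lam + 2) * L * (L / μ) * (q * α)
          - 2 * L ^ 2 * μ * q * (q ^ 2 + q * (q - 1) / (n - 1) * A) *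
            ((2 * lam + 1) * α + β) * (2 * (L / μ) ^ 2 * α ^ 2 + β ^ 2)) * (Φ z.fst - f z)
        + L ^ 2 * q ^ 2 * (q - 1) / (n - 1) * ((2 * lam + 1) * α + β) * (α ^ 2 + β ^ 2) * B := by
  have hmean := hf.expect_potential_reshuffledEpoch_le (r := r) hn hq hg hα hβ hlam hαL hβL hαβ hG
    hfst hsnd
  have hn1 : (0 : ℝ) < n - 1 := sub_pos.2 (mod_cast hn)
  have hq1 : (0 : ℝ) ≤ q * (q - 1) := natCast_mul_natCast_sub_one_nonneg q
  set N := (q : ℝ) ^ 2 + q * (q - 1) / (n - 1) * A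
  have : 0 ≤ N := by positivity
  have hdescent := mul_le_mul_of_nonneg_left (hf.norm_gradient_fst_sq_le z)
    (by positivity : 0 ≤ L ^ 2 * ((2 * lam + 1) * α + β) * q * N * α ^ 2)
  have hPL := mul_le_mul_of_nonneg_left (hf.pl z) (div_nonneg hascent zero_le_two)
  have hκ : L * (L / μ) = μ * (L / μ) ^ 2 := by
    have := hf.pos.ne'
    field_simp
  linear_combination hmean + hdescent + hPL +
    4 * (L ^ 2 * ((2 * lam + 1) * α + β) * q * N * α ^ 2) * (Φ z.fst - f z) * hκ

end IsSmoothPLMax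

end Recurrence

section FiniteSum

variable {E F : Type*}

lemma toLp_simEpoch [AddCommGroup E] [Module ℝ E] [AddCommGroup F] [Module ℝ F] {n : ℕ} (α β : ℝ)
    (b : ℕ) (g₁ : Fin n → E → F → E) (g₂ : Fin n → E → F → F) (σ : Equiv.Perm (Fin n)) (z : E × F)
    (t : ℕ) :
    toLp 2 (simEpoch α β b g₁ g₂ σ t z) = reshuffledEpoch b
      (fun i w => descentAscent α β (toLp 2 (g₁ i w.fst w.snd, g₂ i w.fst w.snd))) σ (toLp 2 z)
      t := by
  induction t with
  | zero => rfl
  | succ t ih =>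
    rw [reshuffledEpoch, ← ih, ← map_batchMean]
    refine ofLp_injective 2 (Prod.ext ?_ ?_)
    · simp [simEpoch, batchAvg, batchMean, sub_eq_add_neg, Prod.fst_sum, Finset.smul_sum,
        smul_comm α (b : ℝ)⁻¹]
    · simp [simEpoch, batchAvg, batchMean, Prod.snd_sum, Finset.smul_sum, smul_comm β (b : ℝ)⁻¹]

lemma smul_toLp_inv_smul_sum [AddCommGroup E] [Module ℝ E] [AddCommGroup F] [Module ℝ F] {n : ℕ}
    (hn : n ≠ 0) (a : Fin n → E) (c : Fin n → F) :
    (n : ℝ) • toLp 2 ((n : ℝ)⁻¹ • ∑ i, a i, (n : ℝ)⁻¹ • ∑ i, c i) = ∑ i, toLp 2 (a i, c i) := by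
  rw [← Prod.smul_mk, toLp_smul, smul_inv_smul₀ (Nat.cast_ne_zero.2 hn), prod_mk_sum, toLp_sum]

lemma lipschitzWith_toLp_of_sq_le [SeminormedAddCommGroup E] [SeminormedAddCommGroup F] {L : ℝ≥0}
    {g₁ : E → F → E} {g₂ : E → F → F}
    (h : ∀ x y x' y', ‖g₁ x y - g₁ x' y'‖ ^ 2 + ‖g₂ x y - g₂ x' y'‖ ^ 2 ≤
      L ^ 2 * (‖x - x'‖ ^ 2 + ‖y - y'‖ ^ 2)) :
    LipschitzWith L fun z : WithLp 2 (E × F) => toLp 2 (g₁ z.fst z.snd, g₂ z.fst z.snd) := by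
  refine LipschitzWith.of_dist_le_mul fun z w => (sq_le_sq₀ dist_nonneg (by positivity)).1 ?_
  simpa [dist_eq_norm, mul_pow, prod_norm_sq_eq_of_L2] using h z.fst z.snd w.fst w.snd

lemma lipschitzWith_of_smul_eq_sum [SeminormedAddCommGroup E] [SeminormedAddCommGroup F]
    [NormedSpace ℝ F] {n : ℕ} (hn : n ≠ 0) {L : ℝ≥0} {g : Fin n → E → F} {G : E → F}
    (hg : ∀ i, LipschitzWith L (g i)) (hG : ∀ z, (n : ℝ) • G z = ∑ i, g i z) :
    LipschitzWith L G := by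
  refine LipschitzWith.of_dist_le_mul fun z w => ?_
  have hnR : (0 : ℝ) < n := Nat.cast_pos.2 (Nat.pos_of_ne_zero hn)
  have hsum : ‖∑ i, (g i z - g i w)‖ ≤ ∑ _i : Fin n, L * ‖z - w‖ :=
    norm_sum_le_of_le _ fun i _ => (hg i).norm_sub_le z w
  rw [Finset.sum_sub_distrib, ← hG, ← hG, ← smul_sub, norm_smul, Real.norm_natCast,
    Finset.sum_const, Finset.card_univ, Fintype.card_fin, nsmul_eq_mul] at hsum
  rw [dist_eq_norm, dist_eq_norm]
  exact le_of_mul_le_mul_left hsum hnR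

variable [NormedAddCommGroup E] [InnerProductSpace ℝ E] [CompleteSpace E]
  [NormedAddCommGroup F] [InnerProductSpace ℝ F] [CompleteSpace F]

lemma isSmoothPLMax_of_partial {f : E → F → ℝ} {g₁ : E → F → E} {g₂ : E → F → F} {Φ : E → ℝ}
    {L : ℝ≥0} {μ : ℝ} (hμ : 0 < μ) (h₁ : ∀ x y, HasGradientAt (fun x' => f x' y) (g₁ x y) x)
    (h₂ : ∀ x y, HasGradientAt (fun y' => f x y') (g₂ x y) y)
    (hL : LipschitzWith L fun z : WithLp 2 (E × F) => toLp 2 (g₁ z.fst z.snd, g₂ z.fst z.snd))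
    (hΦ : ∀ x, IsGreatest (Set.range (f x)) (Φ x))
    (hPL : ∀ x y, 2 * μ * (Φ x - f x y) ≤ ‖g₂ x y‖ ^ 2) :
    IsSmoothPLMax (fun z : WithLp 2 (E × F) => f z.fst z.snd)
      (fun z => toLp 2 (g₁ z.fst z.snd, g₂ z.fst z.snd)) Φ L μ where
  hasGradientAt := hasGradientAt_toLp_of_partial h₁ h₂ hL.continuous
  lipschitz := hL
  isGreatest := hΦ
  pos := hμ
  pl z := hPL z.fst z.snd

end FiniteSum

/- The step-size bounds are in product form so that a single full batch `q = 1` is covered: the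
quotient `1 / (3 * q * (q - 1) * L ^ 2)` is then `1 / 0 = 0`, which no positive steps satisfy. -/
theorem sim_epoch_recurrence_small_steps_general {E F : Type*}
    [NormedAddCommGroup E] [InnerProductSpace ℝ E] [CompleteSpace E]
    [NormedAddCommGroup F] [InnerProductSpace ℝ F] [CompleteSpace F]
    {n b q : ℕ} (hn : 1 < n) (hq : n = b * q) {L μ A B lam : ℝ} (hL : 0 ≤ L) (hμ : 0 < μ)
    (hA : 0 ≤ A) (hlam : 0 ≤ lam)
    {f : Fin n → E → F → ℝ} {g₁ : Fin n → E → F → E} {g₂ : Fin n → E → F → F}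
    {Fm : E → F → ℝ} {G₁ : E → F → E} {G₂ : E → F → F}
    (hFm : ∀ x y, Fm x y = (∑ i, f i x y) / n)
    (hG₁ : ∀ x y, G₁ x y = (n : ℝ)⁻¹ • ∑ i, g₁ i x y)
    (hG₂ : ∀ x y, G₂ x y = (n : ℝ)⁻¹ • ∑ i, g₂ i x y)
    (hg₁ : ∀ i x y, HasGradientAt (fun x' => f i x' y) (g₁ i x y) x)
    (hg₂ : ∀ i x y, HasGradientAt (fun y' => f i x y') (g₂ i x y) y)
    (hsmooth : ∀ i x y x' y', ‖g₁ i x y - g₁ i x' y'‖ ^ 2 + ‖g₂ i x y - g₂ i x' y'‖ ^ 2 ≤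
      L ^ 2 * (‖x - x'‖ ^ 2 + ‖y - y'‖ ^ 2))
    (hvar₁ : ∀ x y, (∑ i, ‖g₁ i x y - G₁ x y‖ ^ 2) / n ≤ A * ‖G₁ x y‖ ^ 2 + B)
    (hvar₂ : ∀ x y, (∑ i, ‖g₂ i x y - G₂ x y‖ ^ 2) / n ≤ A * ‖G₂ x y‖ ^ 2 + B)
    {Φ : E → ℝ} (hΦ : ∀ x, IsGreatest (Set.range (Fm x)) (Φ x))
    (hPL : ∀ x y, 2 * μ * (Φ x - Fm x y) ≤ ‖G₂ x y‖ ^ 2)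
    {V : E → F → ℝ} {r : ℝ} (hV : ∀ x y, V x y = lam * (Φ x - r) + (Φ x - Fm x y))
    {α β : ℝ} (hα : 0 ≤ α) (hβ : 0 ≤ β)
    (hαL : α * (((lam + 1) * (L / μ + 1) + 1) * q * L) ≤ lam) (hβL : β * (q * L) ≤ 1)
    (hαβ : (α ^ 2 + β ^ 2) * (3 * q * (q - 1) * L ^ 2) ≤ 1)
    (hascent : 0 ≤ q * β - 2 * L ^ 2 * q * (q ^ 2 + q * (q - 1) / (n - 1) * A) *
      ((2 * lam + 1) * α + β) * β ^ 2) (x₀ : E) (y₀ : F) :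
    𝔼 σ, V (simEpoch α β b g₁ g₂ σ q (x₀, y₀)).1 (simEpoch α β b g₁ g₂ σ q (x₀, y₀)).2 - V x₀ y₀ ≤
      -((lam - 1) / 2 * (q * α) - 2 * L ^ 2 * q * (q ^ 2 + q * (q - 1) / (n - 1) * A) *
          ((2 * lam + 1) * α + β) * α ^ 2) * ‖gradient Φ x₀‖ ^ 2
        - (μ * q * β - 2 * (lam + 2) * L * (L / μ) * (q * α)
          - 2 * L ^ 2 * μ * q * (q ^ 2 + q * (q - 1) / (n - 1) * A) *
            ((2 * lam + 1) * α + β) * (2 * (L / μ) ^ 2 * α ^ 2 + β ^ 2)) * (Φ x₀ - Fm x₀ y₀)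
        + L ^ 2 * q ^ 2 * (q - 1) / (n - 1) * ((2 * lam + 1) * α + β) * (α ^ 2 + β ^ 2) * B := by
  lift L to ℝ≥0 using hL
  have hn0 : n ≠ 0 := by lia
  have hmean (z : WithLp 2 (E × F)) : (n : ℝ) • toLp 2 (G₁ z.fst z.snd, G₂ z.fst z.snd) =
      ∑ i, toLp 2 (g₁ i z.fst z.snd, g₂ i z.fst z.snd) := by
    rw [hG₁, hG₂, smul_toLp_inv_smul_sum hn0]
  have hlip (i : Fin n) := lipschitzWith_toLp_of_sq_le (hsmooth i)
  have hf := isSmoothPLMax_of_partial (f := Fm) (g₁ := G₁) (g₂ := G₂) hμ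
    (fun x y => by simpa only [hFm, hG₁] using hasGradientAt_sum_div n fun i _ => hg₁ i x y)
    (fun x y => by simpa only [hFm, hG₂] using hasGradientAt_sum_div n fun i _ => hg₂ i x y)
    (lipschitzWith_of_smul_eq_sum hn0 hlip hmean) hΦ hPL
  have hpotential (x : E) (y : F) :
      V x y = potential (fun w => Fm w.fst w.snd) Φ r lam (toLp 2 (x, y)) := hV x y
  simp only [hpotential, Prod.mk.eta, toLp_simEpoch]
  exact hf.expect_potential_reshuffledEpoch_sub_le hn hq hlip hA hα hβ hlam (by linarith)
    (by linarith) (by linarith) hascent (hmean (toLp 2 (x₀, y₀)))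
    (by simpa [Fintype.expect_eq_sum_div_card] using hvar₁ x₀ y₀)
    (by simpa [Fintype.expect_eq_sum_div_card] using hvar₂ x₀ y₀)

end

/-- **Lemma (per-epoch recurrence with small step sizes, simSGDA-RR).**
Under Assumptions 1–4, if the step sizes satisfy
`α ≤ λ/(((λ+1)(κ₂+1)+1)qL)`, `β ≤ 1/(qL)`, `α² + β² ≤ 1/(3q(q−1)L²)` and `C₀ ≥ 0`, then
`E_k[V_λ(z₀^{k+1})] − V_λ(z₀^k) ≤ −C₁‖∇Φ(x₀^k)‖² − C₂(Φ(x₀^k) − f(z₀^k)) + C₃`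
with the explicit constants `C₀, C₁, C₂, C₃`. -/
theorem sim_epoch_recurrence_small_steps
    (dx dy n b q : ℕ) (hn : 2 ≤ n) (hb : 0 < b) (hq : n = b * q)
    (L μ2 A B lam : ℝ) (hL : 0 < L) (hμ2 : 0 < μ2) (hA : 0 ≤ A) (hB : 0 ≤ B) (hlam : 0 < lam)
    (f : Fin n → EuclideanSpace ℝ (Fin dx) → EuclideanSpace ℝ (Fin dy) → ℝ)
    (g1 : Fin n → EuclideanSpace ℝ (Fin dx) → EuclideanSpace ℝ (Fin dy) → EuclideanSpace ℝ (Fin dx))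
    (g2 : Fin n → EuclideanSpace ℝ (Fin dx) → EuclideanSpace ℝ (Fin dy) → EuclideanSpace ℝ (Fin dy))
    (Fm : EuclideanSpace ℝ (Fin dx) → EuclideanSpace ℝ (Fin dy) → ℝ)
    (G1 : EuclideanSpace ℝ (Fin dx) → EuclideanSpace ℝ (Fin dy) → EuclideanSpace ℝ (Fin dx))
    (G2 : EuclideanSpace ℝ (Fin dx) → EuclideanSpace ℝ (Fin dy) → EuclideanSpace ℝ (Fin dy))
    (hFm : ∀ x y, Fm x y = (∑ i, f i x y) / n)
    (hG1 : ∀ x y, G1 x y = (n : ℝ)⁻¹ • ∑ i, g1 i x y)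
    (hG2 : ∀ x y, G2 x y = (n : ℝ)⁻¹ • ∑ i, g2 i x y)
    (hg1 : ∀ i x y, HasGradientAt (fun x' => f i x' y) (g1 i x y) x)
    (hg2 : ∀ i x y, HasGradientAt (fun y' => f i x y') (g2 i x y) y)
    (hsmooth : ∀ i x y x' y',
      ‖g1 i x y - g1 i x' y'‖ ^ 2 + ‖g2 i x y - g2 i x' y'‖ ^ 2
        ≤ L ^ 2 * (‖x - x'‖ ^ 2 + ‖y - y'‖ ^ 2))
    (hvar1 : ∀ x y, (∑ i, ‖g1 i x y - G1 x y‖ ^ 2) / n ≤ A * ‖G1 x y‖ ^ 2 + B)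
    (hvar2 : ∀ x y, (∑ i, ‖g2 i x y - G2 x y‖ ^ 2) / n ≤ A * ‖G2 x y‖ ^ 2 + B)
    (Φ : EuclideanSpace ℝ (Fin dx) → ℝ) (Φs : ℝ)
    (hΦ : ∀ x, IsGreatest (Set.range (Fm x)) (Φ x))
    (hYcl : ∀ x, IsClosed {y | Fm x y = Φ x})
    (hΦs : IsGLB (Set.range Φ) Φs)
    (hPL2 : ∀ x y, 2 * μ2 * (Φ x - Fm x y) ≤ ‖G2 x y‖ ^ 2)
    (V : EuclideanSpace ℝ (Fin dx) → EuclideanSpace ℝ (Fin dy) → ℝ)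
    (hV : ∀ x y, V x y = lam * (Φ x - Φs) + (Φ x - Fm x y))
    (α β : ℝ) (hα : 0 < α) (hβ : 0 < β)
    (hαsmall : α ≤ lam / (((lam + 1) * (L / μ2 + 1) + 1) * (q : ℝ) * L))
    (hβsmall : β ≤ 1 / ((q : ℝ) * L))
    (hαβ : α ^ 2 + β ^ 2 ≤ 1 / (3 * (q : ℝ) * ((q : ℝ) - 1) * L ^ 2))
    (C0 C1 C2 C3 : ℝ)
    (hC0 : C0 = (q : ℝ) * β - 2 * L ^ 2 * (q : ℝ) *
      ((q : ℝ) ^ 2 + ((q : ℝ) * ((q : ℝ) - 1) / ((n : ℝ) - 1)) * A) *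
      ((2 * lam + 1) * α + β) * β ^ 2)
    (hC0pos : 0 ≤ C0)
    (hC1 : C1 = ((lam - 1) / 2) * ((q : ℝ) * α) - 2 * L ^ 2 * (q : ℝ) *
      ((q : ℝ) ^ 2 + ((q : ℝ) * ((q : ℝ) - 1) / ((n : ℝ) - 1)) * A) *
      ((2 * lam + 1) * α + β) * α ^ 2)
    (hC2 : C2 = μ2 * (q : ℝ) * β - 2 * (lam + 2) * L * (L / μ2) * ((q : ℝ) * α)
      - 2 * L ^ 2 * μ2 * (q : ℝ) *
        ((q : ℝ) ^ 2 + ((q : ℝ) * ((q : ℝ) - 1) / ((n : ℝ) - 1)) * A) *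
        ((2 * lam + 1) * α + β) * (2 * (L / μ2) ^ 2 * α ^ 2 + β ^ 2))
    (hC3 : C3 = (L ^ 2 * (q : ℝ) ^ 2 * ((q : ℝ) - 1) / ((n : ℝ) - 1)) *
      ((2 * lam + 1) * α + β) * (α ^ 2 + β ^ 2) * B)
    (x0 : EuclideanSpace ℝ (Fin dx)) (y0 : EuclideanSpace ℝ (Fin dy)) :
    (∑ σ : Equiv.Perm (Fin n),
        V (simEpoch α β b g1 g2 σ q (x0, y0)).1 (simEpoch α β b g1 g2 σ q (x0, y0)).2) /
      (Fintype.card (Equiv.Perm (Fin n)) : ℝ) - V x0 y0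
      ≤ -C1 * ‖gradient Φ x0‖ ^ 2 - C2 * (Φ x0 - Fm x0 y0) + C3 := by
  have hden : 0 ≤ 3 * (q : ℝ) * (q - 1) * L ^ 2 := by
    rw [mul_assoc 3]
    exact mul_nonneg (mul_nonneg zero_le_three (natCast_mul_natCast_sub_one_nonneg q)) (sq_nonneg L)
  subst hC0 hC1 hC2 hC3
  rw [← Fintype.expect_eq_sum_div_card]
  exact sim_epoch_recurrence_small_steps_general hn hq hL.le hμ2 hA hlam.le hFm hG1 hG2 hg1 hg2
    hsmooth hvar1 hvar2 hΦ hPL2 hV hα.le hβ.le (mul_le_of_le_div₀ hlam.le (by positivity) hαsmall)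
    (mul_le_of_le_div₀ zero_le_one (by positivity) hβsmall)
    (mul_le_of_le_div₀ zero_le_one hden hαβ) hC0pos x0 y0
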